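/- arXiv:1205.5301 — 4 statements merged into one kernel-verified Lean document; each statement's English description precedes it below -/
import Mathlib

section
/- Let M, D be positive integers with D squarefree, let Δ = M√D, and suppose the set mn_D(M) = {(m, n) : m, n coprime positive integers, D n² ≤ 3 m², m² ≤ 3 D n², 2mn/(2^e gcd(m, D)) divides M} is nonempty, where e = 0 if 2 ∣ D or if both mn and D+1 are even, and e = 1 otherwise. Choose (m, n) ∈ mn_D(M) maximizing m/n + D·n/m over mn_D(M), set g = 2^e gcd(m, D), p = |m² − D n²|/g, r = 2mn/g, q = (m² + D n²)/g, and k = M/r (a positive integer). Then the planar lattice Λ spanned by √(k/q)·(q, 0) and √(k/q)·(p, r√D) is IWR with det(Λ) = Δ and |Λ| = kq, and every IWR planar lattice Λ' with det(Λ') = Δ satisfies |Λ'| ≤ kq. -/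
/-- The standard inner product on the plane `ℝ × ℝ`. -/
def ip (v w : ℝ × ℝ) : ℝ := v.1 * w.1 + v.2 * w.2

/-- The planar lattice spanned by `v` and `w`. -/
def lat (v w : ℝ × ℝ) : Set (ℝ × ℝ) := {z | ∃ a b : ℤ, z = (a : ℝ) • v + (b : ℝ) • w}

/-- The set of squared lengths of nonzero vectors of the lattice spanned by `v, w`;
its least element is the minimal norm of the lattice. -/
def normSet (v w : ℝ × ℝ) : Set ℝ := {t | ∃ z ∈ lat v w, z ≠ 0 ∧ t = ip z z}

/-- The planar lattice spanned by the linearly independent vectors `v, w` is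
integral and well-rounded. -/
def IsIWR (v w : ℝ × ℝ) : Prop :=
  LinearIndependent ℝ ![v, w] ∧
  ((∃ a : ℤ, ip v v = (a : ℝ)) ∧ (∃ a : ℤ, ip v w = (a : ℝ)) ∧
    (∃ a : ℤ, ip w w = (a : ℝ))) ∧
  ∃ z₁ z₂ : ℝ × ℝ, z₁ ∈ lat v w ∧ z₂ ∈ lat v w ∧ LinearIndependent ℝ ![z₁, z₂] ∧
    IsLeast (normSet v w) (ip z₁ z₁) ∧ ip z₂ z₂ = ip z₁ z₁

/-- The determinant of the planar lattice spanned by `v, w`. -/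
def latDet (v w : ℝ × ℝ) : ℝ := |v.1 * w.2 - w.1 * v.2|

/-- The set `mn_D(M)` of (1.11). -/
def mnSet (D M : ℕ) : Set (ℕ × ℕ) :=
  {mn | 0 < mn.1 ∧ 0 < mn.2 ∧ Nat.gcd mn.1 mn.2 = 1 ∧
    D * mn.2 ^ 2 ≤ 3 * mn.1 ^ 2 ∧ mn.1 ^ 2 ≤ 3 * (D * mn.2 ^ 2) ∧
    (2 * mn.1 * mn.2 /
      (2 ^ (if 2 ∣ D ∨ (2 ∣ mn.1 * mn.2 ∧ 2 ∣ D + 1) then 0 else 1)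
        * Nat.gcd mn.1 D)) ∣ M}

/-!
Two independent minimal vectors of a planar lattice form a basis of it, so an IWR lattice has a
basis with integral Gram matrix `[[A, C], [C, A]]`, where `A` is the minimal norm and `2|C| ≤ A`;
its determinant is `M√D` exactly when `M²D = A² - C²`. Writing `(A + C)/M = m/n` in lowest terms
gives `(A - C)/M = Dn/m`, hence `2A = M(m/n + Dn/m)`: to maximize `A` is to maximize `m/n + Dn/m`.
The condition `2|C| ≤ A` becomes the two inequalities on `(m, n)`, and the integrality of `A`
becomes `2mn ∣ M(m² + Dn²)`. The last condition is the divisibility in `mn_D(M)` because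
`2ᵉ gcd(m, D) = gcd(2mn, m² + Dn²)`.
-/

section Plane

/-- The standard area form on the plane, that is the determinant of the matrix with columns `v`
and `w`; its absolute value is `latDet v w`, and its sign is what makes it bilinear. -/
def areaForm (v w : ℝ × ℝ) : ℝ := v.1 * w.2 - w.1 * v.2

variable (v w x y z : ℝ × ℝ) (a b c d : ℝ)

lemma ip_smul_smul : ip (c • v) (c • w) = c ^ 2 * ip v w := by
  simp only [ip, Prod.smul_fst, Prod.smul_snd, smul_eq_mul]
  ring

lemma areaForm_zero_left : areaForm 0 w = 0 := by simp [areaForm]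

lemma areaForm_zero_right : areaForm v 0 = 0 := by simp [areaForm]

lemma areaForm_smul_smul : areaForm (c • v) (c • w) = c ^ 2 * areaForm v w := by
  simp only [areaForm, Prod.smul_fst, Prod.smul_snd, smul_eq_mul]
  ring

lemma ip_smul_add_smul : ip (a • v + b • w) (c • v + d • w) =
    a * c * ip v v + (a * d + b * c) * ip v w + b * d * ip w w := by
  simp only [ip, Prod.fst_add, Prod.snd_add, Prod.smul_fst, Prod.smul_snd, smul_eq_mul]
  ring

lemma areaForm_smul_add_smul : areaForm (a • v + b • w) (c • v + d • w) =
    (a * d - b * c) * areaForm v w := by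
  simp only [areaForm, Prod.fst_add, Prod.snd_add, Prod.smul_fst, Prod.smul_snd, smul_eq_mul]
  ring

lemma ip_sq_add_areaForm_sq : ip v w ^ 2 + areaForm v w ^ 2 = ip v v * ip w w := by
  simp only [ip, areaForm]
  ring

lemma areaForm_smul_eq_smul_add_smul :
    areaForm x y • z = areaForm z y • x + areaForm x z • y := by
  ext <;> simp only [areaForm, Prod.fst_add, Prod.snd_add, Prod.smul_fst, Prod.smul_snd,
    smul_eq_mul] <;> ring

variable {v w x y}

lemma linearIndependent_pair_iff_areaForm_ne_zero :
    LinearIndependent ℝ ![v, w] ↔ areaForm v w ≠ 0 := by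
  rw [LinearIndependent.pair_iff]
  refine ⟨fun h h0 ↦ ?_, fun h s t hst ↦ ?_⟩
  · rw [areaForm] at h0
    have hv₂ := (h w.2 (-v.2) (by ext <;> simp <;> linarith)).2
    have hv₁ := (h w.1 (-v.1) (by ext <;> simp <;> linarith)).2
    exact one_ne_zero (h 1 0 (by ext <;> simp <;> linarith)).1
  · have hs := areaForm_smul_add_smul v w s t 0 1
    have ht := areaForm_smul_add_smul v w 1 0 s t
    rw [hst, areaForm_zero_left] at hs
    rw [hst, areaForm_zero_right] at ht
    exact ⟨by simpa [h] using hs.symm, by simpa [h] using ht.symm⟩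

lemma exists_eq_smul_add_smul (h : areaForm x y ≠ 0) (z : ℝ × ℝ) :
    ∃ s t : ℝ, z = s • x + t • y := by
  refine ⟨(areaForm x y)⁻¹ * areaForm z y, (areaForm x y)⁻¹ * areaForm x z, ?_⟩
  rw [mul_smul, mul_smul, ← smul_add, ← areaForm_smul_eq_smul_add_smul, inv_smul_smul₀ h]

lemma left_ne_zero_of_areaForm_ne_zero (h : areaForm v w ≠ 0) : v ≠ 0 := by
  rintro rfl
  exact h (areaForm_zero_left w)

lemma ip_self_nonneg (v : ℝ × ℝ) : 0 ≤ ip v v :=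
  add_nonneg (mul_self_nonneg _) (mul_self_nonneg _)

lemma ip_self_pos (hv : v ≠ 0) : 0 < ip v v := by
  refine (ip_self_nonneg v).lt_of_ne' fun h ↦ hv ?_
  obtain ⟨h₁, h₂⟩ := (mul_self_add_mul_self_eq_zero (a := v.1) (b := v.2)).1 h
  exact Prod.ext h₁ h₂

lemma abs_ip_lt {N : ℝ} (h : areaForm x y ≠ 0) (hx : ip x x ≤ N) (hy : ip y y ≤ N) :
    |ip x y| < N := by
  have hN : 0 ≤ N := (ip_self_nonneg x).trans hx
  refine abs_lt_of_sq_lt_sq ?_ hN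
  calc ip x y ^ 2 < ip x y ^ 2 + areaForm x y ^ 2 := lt_add_of_pos_right _ (by positivity)
    _ = ip x x * ip y y := ip_sq_add_areaForm_sq x y
    _ ≤ N * N := mul_le_mul hx hy (ip_self_nonneg y) hN
    _ = N ^ 2 := (sq N).symm

lemma ip_self_smul_add_smul_lt {N s t : ℝ} (h : areaForm x y ≠ 0) (hx : ip x x ≤ N)
    (hy : ip y y ≤ N) (hs : |s| ≤ 1 / 2) (ht : |t| ≤ 1 / 2) :
    ip (s • x + t • y) (s • x + t • y) < N := by
  have hs2 : s * s ≤ 1 / 4 := by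
    rw [← abs_mul_abs_self s]; nlinarith [abs_nonneg s]
  have ht2 : t * t ≤ 1 / 4 := by
    rw [← abs_mul_abs_self t]; nlinarith [abs_nonneg t]
  have hst : |s * t| ≤ 1 / 4 := by
    rw [abs_mul]; nlinarith [abs_nonneg s, abs_nonneg t]
  have hcross : s * t * ip x y ≤ 1 / 4 * |ip x y| :=
    calc s * t * ip x y ≤ |s * t| * |ip x y| := (le_abs_self _).trans_eq (abs_mul _ _)
      _ ≤ 1 / 4 * |ip x y| := by gcongr
  calc ip (s • x + t • y) (s • x + t • y)
      = s * s * ip x x + 2 * (s * t * ip x y) + t * t * ip y y := by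
        rw [ip_smul_add_smul]; ring
    _ ≤ 1 / 4 * N + 2 * (1 / 4 * |ip x y|) + 1 / 4 * N := by
        gcongr <;> exact ip_self_nonneg _
    _ < N := by linarith [abs_ip_lt h hx hy]

end Plane

section Lattice

variable {v w x y z : ℝ × ℝ} {N : ℝ}

lemma left_mem_lat (v w : ℝ × ℝ) : v ∈ lat v w := ⟨1, 0, by simp⟩

lemma right_mem_lat (v w : ℝ × ℝ) : w ∈ lat v w := ⟨0, 1, by simp⟩

lemma smul_add_smul_mem_lat (hx : x ∈ lat v w) (hy : y ∈ lat v w) (s t : ℤ) :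
    (s : ℝ) • x + (t : ℝ) • y ∈ lat v w := by
  obtain ⟨a, b, rfl⟩ := hx
  obtain ⟨c, d, rfl⟩ := hy
  refine ⟨s * a + t * c, s * b + t * d, ?_⟩
  push_cast
  module

lemma mem_lat_of_minimal (hx : x ∈ lat v w) (hy : y ∈ lat v w) (hxy : areaForm x y ≠ 0)
    (hxN : ip x x ≤ N) (hyN : ip y y ≤ N) (hN : N ∈ lowerBounds (normSet v w))
    (hz : z ∈ lat v w) : z ∈ lat x y := by
  obtain ⟨s, t, hst⟩ := exists_eq_smul_add_smul hxy z
  -- Rounding the coordinates of `z` leaves a remainder too short to be a nonzero lattice vector.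
  let u := (s - round s) • x + (t - round t) • y
  have hzu : z = u + ((round s : ℝ) • x + (round t : ℝ) • y) := by
    rw [hst]; module
  have hu : u ∈ lat v w := by
    have hu' := smul_add_smul_mem_lat hz (smul_add_smul_mem_lat hx hy (round s) (round t)) 1 (-1)
    convert hu' using 1
    rw [hzu]; push_cast; module
  have hu0 : u = 0 := by
    by_contra hne
    exact (ip_self_smul_add_smul_lt hxy hxN hyN (abs_sub_round s) (abs_sub_round t)).not_ge
      (hN ⟨u, hu, hne, rfl⟩)
  exact ⟨round s, round t, by rw [hzu, hu0, zero_add]⟩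

lemma latDet_le_of_mem (hx : x ∈ lat v w) (hy : y ∈ lat v w) (hxy : areaForm x y ≠ 0) :
    latDet v w ≤ latDet x y := by
  obtain ⟨a, b, rfl⟩ := hx
  obtain ⟨c, d, rfl⟩ := hy
  rw [areaForm_smul_add_smul] at hxy
  have hindex : a * d - b * c ≠ 0 := by exact_mod_cast left_ne_zero_of_mul hxy
  have hone : (1 : ℝ) ≤ |(a : ℝ) * d - b * c| := by exact_mod_cast Int.one_le_abs hindex
  calc latDet v w ≤ |(a : ℝ) * d - b * c| * |areaForm v w| :=
        le_mul_of_one_le_left (abs_nonneg _) hone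
    _ = latDet _ _ := by rw [← abs_mul, ← areaForm_smul_add_smul]; rfl

lemma exists_int_ip_eq (hvv : ∃ a : ℤ, ip v v = a) (hvw : ∃ a : ℤ, ip v w = a)
    (hww : ∃ a : ℤ, ip w w = a) (hx : x ∈ lat v w) (hy : y ∈ lat v w) :
    ∃ a : ℤ, ip x y = a := by
  obtain ⟨α, hα⟩ := hvv
  obtain ⟨β, hβ⟩ := hvw
  obtain ⟨γ, hγ⟩ := hww
  obtain ⟨a, b, rfl⟩ := hx
  obtain ⟨c, d, rfl⟩ := hy
  refine ⟨a * c * α + (a * d + b * c) * β + b * d * γ, ?_⟩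
  rw [ip_smul_add_smul, hα, hβ, hγ]
  push_cast
  rfl

lemma two_mul_abs_ip_le (hx : x ∈ lat v w) (hy : y ∈ lat v w) (hxy : areaForm x y ≠ 0)
    (hmin : ip x x ∈ lowerBounds (normSet v w)) : 2 * |ip x y| ≤ ip y y := by
  have hexpand (σ : ℤ) : 0 ≤ 2 * σ * ip x y + σ ^ 2 * ip y y := by
    have hne : ((1 : ℤ) : ℝ) • x + (σ : ℝ) • y ≠ 0 := by
      refine left_ne_zero_of_areaForm_ne_zero (w := (0 : ℝ) • x + (1 : ℝ) • y) ?_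
      rw [areaForm_smul_add_smul]
      simpa using hxy
    have hle := hmin ⟨_, smul_add_smul_mem_lat hx hy 1 σ, hne, rfl⟩
    rw [ip_smul_add_smul] at hle
    push_cast at hle
    linarith
  have hadd := hexpand 1
  have hsub := hexpand (-1)
  push_cast at hadd hsub
  rw [← le_div_iff₀' two_pos, abs_le]
  constructor <;> linarith

lemma isLeast_normSet_of_reduced (hv : v ≠ 0) (hvw : 2 * |ip v w| ≤ ip v v)
    (hle : ip v v ≤ ip w w) : IsLeast (normSet v w) (ip v v) := by
  refine ⟨⟨v, left_mem_lat v w, hv, rfl⟩, ?_⟩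
  rintro _ ⟨_, ⟨a, b, rfl⟩, hne, rfl⟩
  have hpos : 0 < a ^ 2 + b ^ 2 - |a * b| := by
    have hab : 0 < a ^ 2 + b ^ 2 := by
      by_contra! h
      obtain ⟨rfl, rfl⟩ : a = 0 ∧ b = 0 := by constructor <;> nlinarith [sq_nonneg a, sq_nonneg b]
      simp at hne
    rw [abs_mul]
    nlinarith [sq_nonneg (|a| - |b|), sq_abs a, sq_abs b]
  have hone : (1 : ℝ) ≤ a ^ 2 + b ^ 2 - |(a : ℝ) * b| := by exact_mod_cast hpos
  have hcross : -(|(a : ℝ) * b| * ip v v) ≤ 2 * (a * b * ip v w) := by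
    have h := neg_abs_le ((a : ℝ) * b * ip v w)
    rw [abs_mul] at h
    nlinarith [abs_nonneg ((a : ℝ) * b)]
  calc ip v v ≤ (a ^ 2 + b ^ 2 - |(a : ℝ) * b|) * ip v v :=
        le_mul_of_one_le_left (ip_self_nonneg v) hone
    _ = a ^ 2 * ip v v + -(|(a : ℝ) * b| * ip v v) + b ^ 2 * ip v v := by ring
    _ ≤ a ^ 2 * ip v v + 2 * (a * b * ip v w) + b ^ 2 * ip w w := by gcongr
    _ = _ := by rw [ip_smul_add_smul]; ring

lemma isIWR_and_isLeast_of_gram {A C : ℤ} (hA : 0 < A) (hC : 2 * |C| ≤ A) (hvv : ip v v = A)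
    (hvw : ip v w = C) (hww : ip w w = A) :
    IsIWR v w ∧ IsLeast (normSet v w) A := by
  have hCR : 2 * |(C : ℝ)| ≤ A := by exact_mod_cast hC
  have hAR : (0 : ℝ) < A := by exact_mod_cast hA
  have hne : areaForm v w ≠ 0 := by
    intro h
    have hsq : |(C : ℝ)| ^ 2 = A ^ 2 := by
      simpa [h, hvv, hvw, hww, ← sq] using ip_sq_add_areaForm_sq v w
    nlinarith [abs_nonneg (C : ℝ)]
  have hli := linearIndependent_pair_iff_areaForm_ne_zero.2 hne
  have hleast : IsLeast (normSet v w) (ip v v) :=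
    isLeast_normSet_of_reduced (left_ne_zero_of_areaForm_ne_zero hne) (by rwa [hvw, hvv])
      (by rw [hvv, hww])
  exact ⟨⟨hli, ⟨⟨A, hvv⟩, ⟨C, hvw⟩, ⟨A, hww⟩⟩, v, w, left_mem_lat v w, right_mem_lat v w, hli,
    hleast, by rw [hvv, hww]⟩, hvv ▸ hleast⟩

lemma IsIWR.exists_latDet_sq_eq (h : IsIWR v w) (hN : IsLeast (normSet v w) N) :
    ∃ A C : ℤ, N = A ∧ 0 < A ∧ 2 * |C| ≤ A ∧ latDet v w ^ 2 = (A : ℝ) ^ 2 - (C : ℝ) ^ 2 := by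
  obtain ⟨hvw, ⟨hα, hβ, hγ⟩, x, y, hx, hy, hxy, hmin, hyx⟩ := h
  rw [linearIndependent_pair_iff_areaForm_ne_zero] at hvw hxy
  obtain rfl := hmin.unique hN
  have hmem {z} (hz : z ∈ lat v w) : z ∈ lat x y :=
    mem_lat_of_minimal hx hy hxy le_rfl hyx.le hmin.2 hz
  have hdet : latDet v w = latDet x y :=
    (latDet_le_of_mem hx hy hxy).antisymm
      (latDet_le_of_mem (hmem (left_mem_lat v w)) (hmem (right_mem_lat v w)) hvw)
  have hpos := ip_self_pos (left_ne_zero_of_areaForm_ne_zero hxy)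
  have hreduced := two_mul_abs_ip_le hx hy hxy hmin.2
  have hlagrange := ip_sq_add_areaForm_sq x y
  obtain ⟨A, hA⟩ := exists_int_ip_eq hα hβ hγ hx hx
  obtain ⟨C, hC⟩ := exists_int_ip_eq hα hβ hγ hx hy
  rw [hyx, hA, hC] at hreduced hlagrange
  refine ⟨A, C, hA, by exact_mod_cast hA ▸ hpos, by exact_mod_cast hreduced, ?_⟩
  rw [hdet, latDet, sq_abs, ← areaForm]
  linarith

end Lattice

section Arithmetic

variable {D M m n g p q r : ℕ}

lemma two_mul_abs_sub_le_add_iff {α : Type*} [CommRing α] [LinearOrder α] [IsStrictOrderedRing α]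
    {a b : α} : 2 * |a - b| ≤ a + b ↔ b ≤ 3 * a ∧ a ≤ 3 * b := by
  rw [← abs_two, ← abs_mul, abs_le]
  constructor <;> rintro ⟨h₁, h₂⟩ <;> constructor <;> linarith

lemma two_dvd_mul_sq_add_mul_sq_iff {m₁ D₁ d : ℕ} (h4 : ¬ 4 ∣ D₁ * d)
    (hmn : (m₁ * d).Coprime n) (hcop : m₁.Coprime D₁) :
    2 ∣ d * m₁ ^ 2 + D₁ * n ^ 2 ↔ ¬ (2 ∣ D₁ * d ∨ (2 ∣ m₁ * d * n ∧ 2 ∣ D₁ * d + 1)) := by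
  have not_even_even {a b : ℕ} (h : a.Coprime b) (ha : Even a) : ¬ Even b := fun hb ↦
    Nat.not_coprime_of_dvd_of_dvd one_lt_two ha.two_dvd hb.two_dvd h
  have hm₁n := not_even_even (hmn.coprime_dvd_left (Nat.dvd_mul_right m₁ d))
  have hdn := not_even_even (hmn.coprime_dvd_left (Nat.dvd_mul_left d m₁))
  have hm₁D₁ := not_even_even hcop
  have hD₁d : Even D₁ → ¬ Even d := fun h h' ↦ h4 (mul_dvd_mul h.two_dvd h'.two_dvd)
  simp only [← even_iff_two_dvd, Nat.even_add, Nat.even_mul, Nat.even_pow, Nat.not_even_one]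
  tauto

lemma gcd_two_mul_mul (h4 : ¬ 4 ∣ D) (hmn : m.Coprime n) :
    Nat.gcd (2 * m * n) (m ^ 2 + D * n ^ 2) =
      2 ^ (if 2 ∣ D ∨ (2 ∣ m * n ∧ 2 ∣ D + 1) then 0 else 1) * Nat.gcd m D := by
  obtain ⟨m₁, D₁, hcop, hm, hD⟩ := Nat.exists_coprime m D
  set d := Nat.gcd m D
  have hm₁n : m₁.Coprime n := hmn.coprime_dvd_left ⟨d, hm⟩
  have hdn : d.Coprime n := hmn.coprime_dvd_left (Nat.gcd_dvd_left m D)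
  set s := d * m₁ ^ 2 + D₁ * n ^ 2 with hs
  have hm₁s : m₁.Coprime s := by
    rw [hs, sq, ← mul_assoc, add_comm, Nat.coprime_add_mul_right_right]
    exact hcop.mul_right (hm₁n.pow_right 2)
  have hns : n.Coprime s := by
    rw [hs, sq n, ← mul_assoc, Nat.coprime_add_mul_right_right]
    exact (hdn.symm).mul_right (hm₁n.symm.pow_right 2)
  calc Nat.gcd (2 * m * n) (m ^ 2 + D * n ^ 2)
      = Nat.gcd (2 * (m₁ * n) * d) (s * d) := by
        congr 1
        · rw [hm]; ring
        · rw [hs, hm, hD]; ring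
    _ = Nat.gcd 2 s * d := by
        rw [Nat.gcd_mul_right, (hm₁s.mul_left hns).gcd_mul_right_cancel]
    _ = 2 ^ (if 2 ∣ D ∨ (2 ∣ m * n ∧ 2 ∣ D + 1) then 0 else 1) * d := by
        congr 1
        have htwo := two_dvd_mul_sq_add_mul_sq_iff (hD ▸ h4) (hm ▸ hmn) hcop
        rw [← hD, ← hm, ← hs] at htwo
        split_ifs with hif
        · rw [pow_zero]
          exact (Nat.prime_two.coprime_iff_not_dvd).2 fun h ↦ htwo.1 h hif
        · rw [pow_one, Nat.gcd_eq_left (htwo.2 hif)]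

lemma div_gcd_dvd_iff {a b c : ℕ} (ha : 0 < a) : a / Nat.gcd a b ∣ c ↔ a ∣ c * b := by
  rw [Nat.div_dvd_iff_dvd_mul (Nat.gcd_dvd_left a b) (Nat.gcd_pos_of_pos_left b ha),
    Nat.dvd_gcd_mul_iff_dvd_mul, mul_comm]

lemma mem_mnSet_iff (h4 : ¬ 4 ∣ D) :
    (m, n) ∈ mnSet D M ↔ 0 < m ∧ 0 < n ∧ m.Coprime n ∧
      2 * |(m : ℤ) ^ 2 - D * n ^ 2| ≤ (m : ℤ) ^ 2 + D * n ^ 2 ∧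
      2 * m * n / Nat.gcd (2 * m * n) (m ^ 2 + D * n ^ 2) ∣ M := by
  rw [two_mul_abs_sub_le_add_iff, and_assoc]
  refine and_congr_right fun _ ↦ and_congr_right fun _ ↦ and_congr_right fun hmn ↦ ?_
  rw [gcd_two_mul_mul h4 hmn]
  norm_cast

lemma exists_coprime_of_sq_sub_sq (hM : 0 < M) {A C : ℤ} (hAC : 0 < A + C)
    (h : (M : ℤ) ^ 2 * D = A ^ 2 - C ^ 2) :
    ∃ m n e : ℕ, 0 < m ∧ 0 < n ∧ 0 < e ∧ m.Coprime n ∧ M = n * e ∧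
      2 * m * A = e * (m ^ 2 + D * n ^ 2) ∧ 2 * m * C = e * (m ^ 2 - D * n ^ 2) := by
  obtain ⟨s, hs⟩ : ∃ s : ℕ, A + C = s := Int.eq_ofNat_of_zero_le hAC.le
  have hs0 : 0 < s := by exact_mod_cast hs ▸ hAC
  obtain ⟨m, n, hmn, hm, hn⟩ := Nat.exists_coprime s M
  set e := Nat.gcd s M
  have he0 : 0 < e := Nat.gcd_pos_of_pos_left _ hs0
  have hadd : A + C = m * e := by rw [hs]; exact_mod_cast hm
  have hsub : m * (A - C) = D * n ^ 2 * e := by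
    refine mul_left_cancel₀ (by positivity : (e : ℤ) ≠ 0) ?_
    rw [hn, Nat.cast_mul] at h
    linear_combination -h - (A - C) * hadd
  exact ⟨m, n, e, Nat.pos_of_mul_pos_right (hm ▸ hs0), Nat.pos_of_mul_pos_right (hn ▸ hM), he0,
    hmn, hn, by linear_combination hsub + m * hadd, by linear_combination m * hadd - hsub⟩

lemma exists_mem_mnSet_of_sq_sub_sq (h4 : ¬ 4 ∣ D) (hM : 0 < M) {A C : ℤ} (hA : 0 < A)
    (hC : 2 * |C| ≤ A) (h : (M : ℤ) ^ 2 * D = A ^ 2 - C ^ 2) :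
    ∃ m n : ℕ, (m, n) ∈ mnSet D M ∧ 2 * (A : ℝ) = M * ((m : ℝ) / n + D * n / m) := by
  have hAC : 0 < A + C := by linarith [neg_abs_le C, abs_nonneg C]
  obtain ⟨m, n, e, hm0, hn0, he0, hmn, rfl, hA', hC'⟩ := exists_coprime_of_sq_sub_sq hM hAC h
  refine ⟨m, n, (mem_mnSet_iff h4).2 ⟨hm0, hn0, hmn, ?_, ?_⟩, ?_⟩
  · refine le_of_mul_le_mul_left ?_ (by positivity : (0 : ℤ) < e)
    calc (e : ℤ) * (2 * |(m : ℤ) ^ 2 - D * n ^ 2|) = 2 * |e * ((m : ℤ) ^ 2 - D * n ^ 2)| := by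
          rw [abs_mul, Nat.abs_cast]; ring
      _ = 2 * m * (2 * |C|) := by
          rw [← hC', abs_mul, abs_of_nonneg (by positivity : (0 : ℤ) ≤ 2 * m)]; ring
      _ ≤ 2 * m * A := by gcongr
      _ = e * (m ^ 2 + D * n ^ 2) := hA'
  · rw [div_gcd_dvd_iff (by positivity), ← Int.natCast_dvd_natCast]
    refine ⟨A, ?_⟩
    push_cast
    linear_combination -n * hA'
  · have hAR : 2 * (m : ℝ) * A = e * (m ^ 2 + D * n ^ 2) := by exact_mod_cast hA'
    push_cast
    field_simp
    linear_combination hAR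

lemma IsIWR.exists_mem_mnSet {v w : ℝ × ℝ} {N : ℝ} (h : IsIWR v w) (h4 : ¬ 4 ∣ D) (hM : 0 < M)
    (hdet : latDet v w = M * √D) (hN : IsLeast (normSet v w) N) :
    ∃ m n : ℕ, (m, n) ∈ mnSet D M ∧ 2 * N = M * ((m : ℝ) / n + D * n / m) := by
  obtain ⟨A, C, rfl, hA, hC, hAC⟩ := h.exists_latDet_sq_eq hN
  rw [hdet, mul_pow, Real.sq_sqrt D.cast_nonneg] at hAC
  exact exists_mem_mnSet_of_sq_sub_sq h4 hM hA hC (by exact_mod_cast hAC)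

lemma natAbs_sq_add_mul_sq :
    ((m : ℤ) ^ 2 - D * n ^ 2).natAbs ^ 2 + D * (2 * m * n) ^ 2 = (m ^ 2 + D * n ^ 2) ^ 2 := by
  zify
  rw [sq_abs]
  ring

lemma dvd_natAbs_sq_sub (hr : g ∣ 2 * m * n) (hq : g ∣ m ^ 2 + D * n ^ 2) :
    g ∣ ((m : ℤ) ^ 2 - D * n ^ 2).natAbs := by
  refine (Nat.pow_dvd_pow_iff two_ne_zero).1 ?_
  rw [Nat.dvd_add_iff_left ((pow_dvd_pow_of_dvd hr 2).mul_left D), natAbs_sq_add_mul_sq]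
  exact pow_dvd_pow_of_dvd hq 2

lemma sq_add_mul_sq_of_mul_eq (hg : 0 < g) (hp : g * p = ((m : ℤ) ^ 2 - D * n ^ 2).natAbs)
    (hr : g * r = 2 * m * n) (hq : g * q = m ^ 2 + D * n ^ 2) :
    p ^ 2 + D * r ^ 2 = q ^ 2 := by
  refine Nat.eq_of_mul_eq_mul_left (pow_pos hg 2) ?_
  calc g ^ 2 * (p ^ 2 + D * r ^ 2) = (g * p) ^ 2 + D * (g * r) ^ 2 := by ring
    _ = (g * q) ^ 2 := by rw [hp, hr, hq, natAbs_sq_add_mul_sq]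
    _ = g ^ 2 * q ^ 2 := mul_pow g q 2

lemma two_mul_le_of_mul_eq (hg : 0 < g) (hp : g * p = ((m : ℤ) ^ 2 - D * n ^ 2).natAbs)
    (hq : g * q = m ^ 2 + D * n ^ 2)
    (hle : 2 * |(m : ℤ) ^ 2 - D * n ^ 2| ≤ (m : ℤ) ^ 2 + D * n ^ 2) : 2 * p ≤ q := by
  refine le_of_mul_le_mul_left ?_ hg
  rw [mul_left_comm, hp, hq]
  zify
  exact hle

lemma div_add_mul_div_eq (hm : 0 < m) (hn : 0 < n) (hr : g * r = 2 * m * n)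
    (hq : g * q = m ^ 2 + D * n ^ 2) : (m : ℝ) / n + D * n / m = 2 * (q / r) := by
  have hgr : 0 < g * r := by rw [hr]; positivity
  have hgR : (g : ℝ) ≠ 0 := by exact_mod_cast (Nat.pos_of_mul_pos_right hgr).ne'
  have hrR : (g : ℝ) * r = 2 * m * n := by exact_mod_cast hr
  have hqR : (g : ℝ) * q = m ^ 2 + D * n ^ 2 := by exact_mod_cast hq
  calc (m : ℝ) / n + D * n / m = 2 * ((m ^ 2 + D * n ^ 2) / (2 * m * n)) := by field_simp
    _ = 2 * (q / r) := by rw [← hrR, ← hqR, mul_div_mul_left _ _ hgR]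

lemma pythagorean_of_mem_mnSet {k : ℕ} (h4 : ¬ 4 ∣ D) (hmn : (m, n) ∈ mnSet D M)
    (hg : g = 2 ^ (if 2 ∣ D ∨ (2 ∣ m * n ∧ 2 ∣ D + 1) then 0 else 1) * Nat.gcd m D)
    (hp : p = ((m ^ 2 : ℤ) - D * n ^ 2).natAbs / g) (hr : r = 2 * m * n / g)
    (hq : q = (m ^ 2 + D * n ^ 2) / g) (hk : k = M / r) :
    0 < q ∧ 2 * p ≤ q ∧ p ^ 2 + D * r ^ 2 = q ^ 2 ∧ k * r = M ∧
      M * ((m : ℝ) / n + D * n / m) = 2 * (k * q) := by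
  obtain ⟨hm0, hn0, hcop, hle, hdvd⟩ := (mem_mnSet_iff h4).1 hmn
  rw [← gcd_two_mul_mul h4 hcop] at hg
  rw [← hg, ← hr] at hdvd
  have hg0 : 0 < g := hg ▸ Nat.gcd_pos_of_pos_left _ (by positivity)
  have hg_r : g ∣ 2 * m * n := hg ▸ Nat.gcd_dvd_left _ _
  have hg_q : g ∣ m ^ 2 + D * n ^ 2 := hg ▸ Nat.gcd_dvd_right _ _
  have hgr : g * r = 2 * m * n := hr ▸ Nat.mul_div_cancel' hg_r
  have hgq : g * q = m ^ 2 + D * n ^ 2 := hq ▸ Nat.mul_div_cancel' hg_q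
  have hgp : g * p = ((m : ℤ) ^ 2 - D * n ^ 2).natAbs :=
    hp ▸ Nat.mul_div_cancel' (dvd_natAbs_sq_sub hg_r hg_q)
  have hkr : k * r = M := hk ▸ Nat.div_mul_cancel hdvd
  have hq0 : 0 < q := Nat.pos_of_mul_pos_left (hgq ▸ (by positivity : 0 < m ^ 2 + D * n ^ 2))
  have hr0 : 0 < r := Nat.pos_of_mul_pos_left (hgr ▸ (by positivity : 0 < 2 * m * n))
  refine ⟨hq0, two_mul_le_of_mul_eq hg0 hgp hgq hle, sq_add_mul_sq_of_mul_eq hg0 hgp hgr hgq,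
    hkr, ?_⟩
  rw [div_add_mul_div_eq hm0 hn0 hgr hgq, ← hkr]
  push_cast
  field_simp

end Arithmetic

section Construction

variable {D p q r k : ℝ} {v w : ℝ × ℝ}

lemma gram_of_sq_add_mul_sq (hD : 0 ≤ D) (hk : 0 ≤ k) (hq : 0 < q)
    (hpqr : p ^ 2 + D * r ^ 2 = q ^ 2) (hv : v = √(k / q) • (q, 0))
    (hw : w = √(k / q) • (p, r * √D)) :
    ip v v = k * q ∧ ip v w = k * p ∧ ip w w = k * q := by
  have hc : √(k / q) ^ 2 = k / q := Real.sq_sqrt (by positivity)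
  have hkq : k / q * q ^ 2 = k * q := by field_simp
  have hww : ip (p, r * √D) (p, r * √D) = q ^ 2 := by
    rw [← hpqr, ip]
    linear_combination r ^ 2 * Real.sq_sqrt hD
  rw [hv, hw, ip_smul_smul, ip_smul_smul, ip_smul_smul, hc, hww]
  refine ⟨?_, ?_, hkq⟩ <;> simp only [ip] <;> field_simp <;> ring

lemma latDet_eq_mul_sqrt (hk : 0 ≤ k) (hq : 0 < q) (hr : 0 ≤ r)
    (hv : v = √(k / q) • (q, 0)) (hw : w = √(k / q) • (p, r * √D)) :
    latDet v w = k * r * √D := by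
  have hc : √(k / q) ^ 2 = k / q := Real.sq_sqrt (by positivity)
  have harea : areaForm v w = k * r * √D := by
    rw [hv, hw, areaForm_smul_smul, hc, areaForm]
    field_simp
    ring
  rw [latDet, ← areaForm, harea, abs_of_nonneg (by positivity)]

end Construction

theorem stmt13_general (M D : ℕ) (hM : 0 < M) (h4 : ¬ 4 ∣ D)
    (Δ : ℝ) (hΔ : Δ = (M : ℝ) * Real.sqrt (D : ℝ))
    (m n : ℕ) (hmn : (m, n) ∈ mnSet D M)
    (hmax : ∀ m' n' : ℕ, (m', n') ∈ mnSet D M →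
      (m' : ℝ) / (n' : ℝ) + (D : ℝ) * (n' : ℝ) / (m' : ℝ)
        ≤ (m : ℝ) / (n : ℝ) + (D : ℝ) * (n : ℝ) / (m : ℝ))
    (g p r q k : ℕ)
    (hg : g = 2 ^ (if 2 ∣ D ∨ (2 ∣ m * n ∧ 2 ∣ D + 1) then 0 else 1) * Nat.gcd m D)
    (hp : p = ((m ^ 2 : ℤ) - D * n ^ 2).natAbs / g)
    (hr : r = 2 * m * n / g)
    (hq : q = (m ^ 2 + D * n ^ 2) / g)
    (hk : k = M / r)
    (v w : ℝ × ℝ)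
    (hv : v = Real.sqrt ((k : ℝ) / (q : ℝ)) • ((q : ℝ), (0 : ℝ)))
    (hw : w = Real.sqrt ((k : ℝ) / (q : ℝ)) • ((p : ℝ), (r : ℝ) * Real.sqrt (D : ℝ))) :
    0 < k ∧
    IsIWR v w ∧
    latDet v w = Δ ∧
    IsLeast (normSet v w) ((k : ℝ) * (q : ℝ)) ∧
    ∀ (v' w' : ℝ × ℝ) (N' : ℝ), IsIWR v' w' → latDet v' w' = Δ →
      IsLeast (normSet v' w') N' → N' ≤ (k : ℝ) * (q : ℝ) := by
  obtain ⟨hq0, hpq, hpqr, hkr, hval⟩ := pythagorean_of_mem_mnSet h4 hmn hg hp hr hq hk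
  have hk0 : 0 < k := Nat.pos_of_mul_pos_right (hkr ▸ hM)
  obtain ⟨hvv, hvw, hww⟩ := gram_of_sq_add_mul_sq D.cast_nonneg k.cast_nonneg
    (by exact_mod_cast hq0) (by exact_mod_cast hpqr) hv hw
  have hreduced : 2 * |(k * p : ℤ)| ≤ k * q := by
    rw [abs_of_nonneg (by positivity), mul_left_comm]
    exact_mod_cast Nat.mul_le_mul_left k hpq
  obtain ⟨hiwr, hleast⟩ := isIWR_and_isLeast_of_gram (by positivity) hreduced
    (by exact_mod_cast hvv) (by exact_mod_cast hvw) (by exact_mod_cast hww)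
  refine ⟨hk0, hiwr, ?_, by exact_mod_cast hleast, fun v' w' N' hiwr' hdet' hN' ↦ ?_⟩
  · rw [latDet_eq_mul_sqrt k.cast_nonneg (by exact_mod_cast hq0) r.cast_nonneg hv hw, hΔ, ← hkr,
      Nat.cast_mul]
  · obtain ⟨m', n', hmn', hval'⟩ := hiwr'.exists_mem_mnSet h4 hM (hdet'.trans hΔ) hN'
    have hmono := mul_le_mul_of_nonneg_left (hmax m' n' hmn') (M.cast_nonneg (α := ℝ))
    linarith

/-- The optimization part of Theorem 1.4: for `Δ = M√D` with `mn_D(M) ≠ ∅`, the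
pair `(m,n) ∈ mn_D(M)` maximizing `m/n + D n/m` yields, via `p, r, q, k`, the
IWR lattice `√(k/q)·Ω_D(p,q)` of determinant `Δ` and minimal norm `kq`, which
maximizes the minimal norm among all IWR planar lattices of determinant `Δ`. -/
theorem stmt13 (M D : ℕ) (hM : 0 < M) (hD : 0 < D) (hDsf : Squarefree D)
    (Δ : ℝ) (hΔ : Δ = (M : ℝ) * Real.sqrt (D : ℝ))
    (m n : ℕ) (hmn : (m, n) ∈ mnSet D M)
    (hmax : ∀ m' n' : ℕ, (m', n') ∈ mnSet D M →
      (m' : ℝ) / (n' : ℝ) + (D : ℝ) * (n' : ℝ) / (m' : ℝ)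
        ≤ (m : ℝ) / (n : ℝ) + (D : ℝ) * (n : ℝ) / (m : ℝ))
    (g p r q k : ℕ)
    (hg : g = 2 ^ (if 2 ∣ D ∨ (2 ∣ m * n ∧ 2 ∣ D + 1) then 0 else 1) * Nat.gcd m D)
    (hp : p = ((m ^ 2 : ℤ) - D * n ^ 2).natAbs / g)
    (hr : r = 2 * m * n / g)
    (hq : q = (m ^ 2 + D * n ^ 2) / g)
    (hk : k = M / r)
    (v w : ℝ × ℝ)
    (hv : v = Real.sqrt ((k : ℝ) / (q : ℝ)) • ((q : ℝ), (0 : ℝ)))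
    (hw : w = Real.sqrt ((k : ℝ) / (q : ℝ)) • ((p : ℝ), (r : ℝ) * Real.sqrt (D : ℝ))) :
    0 < k ∧
    IsIWR v w ∧
    latDet v w = Δ ∧
    IsLeast (normSet v w) ((k : ℝ) * (q : ℝ)) ∧
    ∀ (v' w' : ℝ × ℝ) (N' : ℝ), IsIWR v' w' → latDet v' w' = Δ →
      IsLeast (normSet v' w') N' → N' ≤ (k : ℝ) * (q : ℝ) :=
  stmt13_general M D hM (fun h ↦ by simpa using hDsf 2 h) Δ hΔ m n hmn hmax g p r q k
    hg hp hr hq hk v w hv hw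
end

section
/- Let M and D be positive integers with D squarefree. For each positive divisor r of M let f(r) denote the number of pairs of positive integers (p, q) with q² − p² = r² D, gcd(p, q) = 1, and 2p ≤ q. Then 2·Σ_{r ∣ M} f(r) ≤ Σ_{r ∣ M} 2^{ω(rD)}, where ω(u) denotes the number of distinct prime divisors of u and both sums run over the positive divisors r of M. -/
/-!
A pair `(p, q)` with `q² - p² = N` is a factorization `N = (q - p)(q + p)`. When `gcd(p, q) = 1`,
the two factors are coprime if `N` is odd; if `N` is even, then `p` and `q` are odd and
`N / 4 = ((q - p) / 2) ((q + p) / 2)` is a coprime factorization. A factorization of `n` into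
coprime factors is determined by the set of primes dividing the first factor, so there are at most
`2 ^ ω(n)` of them, and exchanging the factors shows that at most half of them are increasing.
-/

section CoprimeFactorizations

theorem two_mul_card_filter_fst_lt_snd_le {α : Type*} [Preorder α] [DecidableLT α]
    {s : Finset (α × α)} (hs : ∀ x ∈ s, x.swap ∈ s) :
    2 * (s.filter fun x ↦ x.1 < x.2).card ≤ s.card := by
  have swap_le : (s.filter fun x ↦ x.1 < x.2).card ≤ (s.filter fun x ↦ ¬ x.1 < x.2).card := by
    refine Finset.card_le_card_of_injOn Prod.swap (fun x hx ↦ ?_) Prod.swap_injective.injOn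
    have hx' := Finset.mem_filter.1 hx
    exact Finset.mem_filter.2 ⟨hs x hx'.1, hx'.2.not_gt⟩
  rw [← Finset.card_filter_add_card_filter_not (s := s) fun x ↦ x.1 < x.2]
  lia

theorem prod_primeFactors_pow_factorization_mul {a b : ℕ} (ha : a ≠ 0) (hab : a.Coprime b) :
    ∏ p ∈ a.primeFactors, p ^ (a * b).factorization p = a := by
  calc ∏ p ∈ a.primeFactors, p ^ (a * b).factorization p
      = ∏ p ∈ a.primeFactors, p ^ a.factorization p :=
        Finset.prod_congr rfl fun p hp ↦ by
          rw [Nat.factorization_eq_of_coprime_left hab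
            (Nat.mem_primeFactors_iff_mem_primeFactorsList.1 hp)]
    _ = a := Nat.prod_factorization_pow_eq_self ha

/-- The factorizations `n = a * b` with `a` and `b` coprime, as ordered pairs `(a, b)`; that is, the
unitary divisors `a` of `n` together with their cofactors. There are none for `n = 0`. -/
def coprimeFactorizations (n : ℕ) : Finset (ℕ × ℕ) :=
  n.divisorsAntidiagonal.filter fun x ↦ x.1.Coprime x.2

/-- The coprime factorizations `n = a * b` with `a < b`. -/
def increasingCoprimeFactorizations (n : ℕ) : Finset (ℕ × ℕ) :=
  (coprimeFactorizations n).filter fun x ↦ x.1 < x.2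

theorem mem_coprimeFactorizations {n : ℕ} {x : ℕ × ℕ} :
    x ∈ coprimeFactorizations n ↔ (x.1 * x.2 = n ∧ n ≠ 0) ∧ x.1.Coprime x.2 := by
  rw [coprimeFactorizations, Finset.mem_filter, Nat.mem_divisorsAntidiagonal]

theorem swap_mem_coprimeFactorizations {n : ℕ} {x : ℕ × ℕ} (hx : x ∈ coprimeFactorizations n) :
    x.swap ∈ coprimeFactorizations n := by
  obtain ⟨⟨hmul, hn⟩, hcop⟩ := mem_coprimeFactorizations.1 hx
  exact mem_coprimeFactorizations.2 ⟨⟨(mul_comm _ _).trans hmul, hn⟩, hcop.symm⟩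

theorem injOn_primeFactors_fst_coprimeFactorizations (n : ℕ) :
    Set.InjOn (fun x : ℕ × ℕ ↦ x.1.primeFactors) (coprimeFactorizations n) := by
  rintro ⟨a, b⟩ hx ⟨a', b'⟩ hx' (h : a.primeFactors = a'.primeFactors)
  obtain ⟨⟨rfl : a * b = n, hn⟩, hcop⟩ := mem_coprimeFactorizations.1 hx
  obtain ⟨⟨hmul : a' * b' = a * b, -⟩, hcop'⟩ := mem_coprimeFactorizations.1 hx'
  have ha : a ≠ 0 := left_ne_zero_of_mul hn
  have ha' : a' ≠ 0 := left_ne_zero_of_mul (hmul ▸ hn)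
  have hfst : a = a' := by
    rw [← prod_primeFactors_pow_factorization_mul ha hcop,
      ← prod_primeFactors_pow_factorization_mul ha' hcop', h, hmul]
  subst hfst
  rw [mul_left_cancel₀ ha hmul]

theorem card_coprimeFactorizations_le (n : ℕ) :
    (coprimeFactorizations n).card ≤ 2 ^ n.primeFactors.card := by
  rw [← Finset.card_powerset]
  refine Finset.card_le_card_of_injOn _ (fun x hx ↦ ?_)
    (injOn_primeFactors_fst_coprimeFactorizations n)
  obtain ⟨⟨hmul, hn⟩, -⟩ := mem_coprimeFactorizations.1 hx
  exact Finset.mem_powerset.2 (Nat.primeFactors_mono (Dvd.intro _ hmul) hn)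

theorem two_mul_card_increasingCoprimeFactorizations_le (n : ℕ) :
    2 * (increasingCoprimeFactorizations n).card ≤ 2 ^ n.primeFactors.card :=
  (two_mul_card_filter_fst_lt_snd_le fun _ ↦ swap_mem_coprimeFactorizations).trans
    (card_coprimeFactorizations_le n)

theorem mk_mem_increasingCoprimeFactorizations {a d : ℕ} (ha : a ≠ 0) (hd : 0 < d)
    (hcop : a.Coprime d) : (a, a + d) ∈ increasingCoprimeFactorizations (a * (a + d)) := by
  have hcop' : a.Coprime (a + d) := Nat.coprime_self_add_right.2 hcop
  exact Finset.mem_filter.2 ⟨mem_coprimeFactorizations.2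
    ⟨⟨rfl, mul_ne_zero ha (by lia)⟩, hcop'⟩, Nat.lt_add_of_pos_right hd⟩

end CoprimeFactorizations

section PrimitiveSquareDifferences

/-- The primitive representations of `N` as a difference of two positive squares: the pairs
`(p, q)` with `q² - p² = N`, `0 < p` and `gcd(p, q) = 1`. The equation is written additively to
avoid truncated subtraction. -/
def primitiveSquareDifferences (N : ℕ) : Set (ℕ × ℕ) :=
  {x | 0 < x.1 ∧ x.2 ^ 2 = x.1 ^ 2 + N ∧ x.1.Coprime x.2}

variable {N : ℕ}

theorem primitiveSquareDifferences_subset_image_of_odd (hN : Odd N) :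
    primitiveSquareDifferences N ⊆ (increasingCoprimeFactorizations N).image
      fun x ↦ ((x.2 - x.1) / 2, (x.1 + x.2) / 2) := by
  rintro ⟨p, q⟩ ⟨hp : 0 < p, hsq : q ^ 2 = p ^ 2 + N, hcop : p.Coprime q⟩
  obtain ⟨a, rfl⟩ : ∃ a, q = p + a :=
    Nat.exists_eq_add_of_le ((Nat.pow_le_pow_iff_left two_ne_zero).1 (by lia))
  have hmul : N = a * (a + 2 * p) := by linarith
  have ha : Odd a := (Nat.odd_mul.1 (hmul ▸ hN)).1
  have hcop' : a.Coprime (2 * p) :=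
    ha.coprime_two_right.mul_right (Nat.coprime_self_add_right.1 hcop).symm
  have hmem := mk_mem_increasingCoprimeFactorizations ha.pos.ne' (by lia) hcop'
  refine Finset.mem_coe.2 (Finset.mem_image.2 ⟨_, hmul ▸ hmem, Prod.ext ?_ ?_⟩) <;>
    dsimp only <;> lia

theorem odd_of_mem_primitiveSquareDifferences (hN : Even N) {x : ℕ × ℕ}
    (hx : x ∈ primitiveSquareDifferences N) : Odd x.1 ∧ Odd x.2 := by
  obtain ⟨-, hsq, hcop⟩ := hx
  have hparity : Even x.2 ↔ Even x.1 := by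
    simpa [hN, Nat.even_add, Nat.even_pow] using congrArg Even hsq
  have hp : Odd x.1 := Nat.not_even_iff_odd.1 fun hp ↦
    Nat.not_coprime_of_dvd_of_dvd one_lt_two hp.two_dvd (hparity.2 hp).two_dvd hcop
  exact ⟨hp, Nat.not_even_iff_odd.1 (hparity.not.2 (Nat.not_even_iff_odd.2 hp))⟩

theorem four_dvd_of_mem_primitiveSquareDifferences (hN : Even N) {x : ℕ × ℕ}
    (hx : x ∈ primitiveSquareDifferences N) : 4 ∣ N := by
  obtain ⟨⟨m, hm⟩, ⟨n, hn⟩⟩ := odd_of_mem_primitiveSquareDifferences hN hx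
  have hsq : (2 * n + 1) ^ 2 = (2 * m + 1) ^ 2 + N := hn ▸ hm ▸ hx.2.1
  lia

theorem primitiveSquareDifferences_four_mul_subset_image {n : ℕ} (hn : n ≠ 0) :
    primitiveSquareDifferences (4 * n) ⊆ (increasingCoprimeFactorizations n).image
      fun x ↦ (x.2 - x.1, x.1 + x.2) := by
  rintro ⟨p, q⟩ hx
  have heven : Even (4 * n) := (show Even 4 by decide).mul_right n
  obtain ⟨hp_odd : Odd p, hq_odd : Odd q⟩ := odd_of_mem_primitiveSquareDifferences heven hx
  obtain ⟨hp : 0 < p, hsq : q ^ 2 = p ^ 2 + 4 * n, hcop : p.Coprime q⟩ := hx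
  obtain ⟨a, rfl⟩ : ∃ a, q = p + 2 * a := by
    have hpq : p ≤ q := (Nat.pow_le_pow_iff_left two_ne_zero).1 (by lia)
    obtain ⟨a, ha⟩ := (Nat.Odd.sub_odd hq_odd hp_odd).two_dvd
    exact ⟨a, by lia⟩
  obtain rfl : n = a * (a + p) := by linarith
  have hcop' : a.Coprime p := (Nat.coprime_self_add_right.1 hcop).symm.coprime_mul_left
  have hmem := mk_mem_increasingCoprimeFactorizations (left_ne_zero_of_mul hn) hp hcop'
  refine Finset.mem_coe.2 (Finset.mem_image.2 ⟨_, hmem, Prod.ext ?_ ?_⟩) <;> dsimp only <;> lia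

theorem exists_dvd_primitiveSquareDifferences_subset_image (hN : N ≠ 0) :
    ∃ n, n ∣ N ∧ ∃ f : ℕ × ℕ → ℕ × ℕ,
      primitiveSquareDifferences N ⊆ (increasingCoprimeFactorizations n).image f := by
  rcases N.even_or_odd with heven | hodd
  · rcases (primitiveSquareDifferences N).eq_empty_or_nonempty with hempty | ⟨x, hx⟩
    · exact ⟨N, dvd_rfl, id, hempty ▸ Set.empty_subset _⟩
    · obtain ⟨n, rfl⟩ := four_dvd_of_mem_primitiveSquareDifferences heven hx
      exact ⟨n, Dvd.intro_left 4 rfl, _,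
        primitiveSquareDifferences_four_mul_subset_image (right_ne_zero_of_mul hN)⟩
  · exact ⟨N, dvd_rfl, _, primitiveSquareDifferences_subset_image_of_odd hodd⟩

theorem finite_primitiveSquareDifferences (hN : N ≠ 0) :
    (primitiveSquareDifferences N).Finite := by
  obtain ⟨n, -, f, hf⟩ := exists_dvd_primitiveSquareDifferences_subset_image hN
  exact (Finset.finite_toSet _).subset hf

theorem two_mul_ncard_primitiveSquareDifferences_le (hN : N ≠ 0) :
    2 * (primitiveSquareDifferences N).ncard ≤ 2 ^ N.primeFactors.card := by
  obtain ⟨n, hnN, f, hf⟩ := exists_dvd_primitiveSquareDifferences_subset_image hN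
  calc 2 * (primitiveSquareDifferences N).ncard
      ≤ 2 * ((increasingCoprimeFactorizations n).image f).card := by
        rw [← Set.ncard_coe_finset]
        exact Nat.mul_le_mul_left 2 (Set.ncard_le_ncard hf)
    _ ≤ 2 * (increasingCoprimeFactorizations n).card :=
        Nat.mul_le_mul_left 2 Finset.card_image_le
    _ ≤ 2 ^ n.primeFactors.card := two_mul_card_increasingCoprimeFactorizations_le n
    _ ≤ 2 ^ N.primeFactors.card :=
        Nat.pow_le_pow_right two_pos (Finset.card_le_card (Nat.primeFactors_mono hnN hN))

end PrimitiveSquareDifferences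

theorem primeFactors_pow_mul {k : ℕ} (hk : k ≠ 0) (r D : ℕ) :
    (r ^ k * D).primeFactors = (r * D).primeFactors := by
  rcases eq_or_ne r 0 with rfl | hr
  · rw [zero_pow hk]
  rcases eq_or_ne D 0 with rfl | hD
  · rw [mul_zero, mul_zero]
  rw [Nat.primeFactors_mul (pow_ne_zero k hr) hD, Nat.primeFactors_mul hr hD,
    Nat.primeFactors_pow r hk]

theorem stmt14_general (M D : ℕ) (hM : 0 < M) (hD : 0 < D) :
    2 * ∑ r ∈ M.divisors, (primitiveSquareDifferences (r ^ 2 * D)).ncard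
      ≤ ∑ r ∈ M.divisors, 2 ^ (r * D).primeFactors.card := by
  rw [Finset.mul_sum]
  refine Finset.sum_le_sum fun r hr ↦ ?_
  have hr₀ : 0 < r := Nat.pos_of_dvd_of_pos (Nat.dvd_of_mem_divisors hr) hM
  rw [← primeFactors_pow_mul two_ne_zero]
  exact two_mul_ncard_primitiveSquareDifferences_le (by positivity)

/-- The counting bound (1.10) of Theorem 1.6:
`2 |IWR(M√D)| = 2 Σ_{r ∣ M} f(r) ≤ Σ_{r ∣ M} 2^{ω(rD)}`, where `f(r)` counts
pairs `(p,q)` of positive integers with `q² − p² = r²D`, `gcd(p,q) = 1`,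
`2p ≤ q`, and `ω(u)` is the number of distinct prime divisors of `u`. -/
theorem stmt14 (M D : ℕ) (hM : 0 < M) (hD : 0 < D) (hDsf : Squarefree D) :
    2 * ∑ r ∈ M.divisors,
        Nat.card {pq : ℕ × ℕ // 0 < pq.1 ∧ 0 < pq.2 ∧
          pq.2 ^ 2 = pq.1 ^ 2 + r ^ 2 * D ∧ Nat.gcd pq.1 pq.2 = 1 ∧ 2 * pq.1 ≤ pq.2}
      ≤ ∑ r ∈ M.divisors, 2 ^ (r * D).primeFactors.card := by
  refine le_trans ?_ (stmt14_general M D hM hD)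
  gcongr with r hr
  have hN : r ^ 2 * D ≠ 0 := (mul_pos (pow_pos (Nat.pos_of_mem_divisors hr) 2) hD).ne'
  exact Nat.card_mono (finite_primitiveSquareDifferences hN)
    fun _ hpq ↦ ⟨hpq.1, hpq.2.2.1, hpq.2.2.2.1⟩
end

section
/- Let c be a positive integer. Then the number of pairs of positive integers (p, q) with q² − p² = c and 2p ≤ q is at most the number of positive divisors b of c satisfying √c < b ≤ √(3c). -/
/-!
With `b = q + p`, the equation `q² = p² + c` gives `2qb = b² + c`. Hence `b` divides `c`, and since
this is linear in `q`, a nonzero `b` determines `q` and then `p`. As `c = b(q - p)`, the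
inequality `2p ≤ q`, which says `b ≤ 3(q - p)`, becomes `b² ≤ 3c`.
-/

section Semiring

variable {R : Type*} [CommSemiring R] {p q c : R}

theorem two_mul_mul_add_eq_of_sq_eq_sq_add (h : q ^ 2 = p ^ 2 + c) :
    2 * q * (q + p) = (q + p) ^ 2 + c := by
  calc 2 * q * (q + p) = q ^ 2 + q ^ 2 + 2 * q * p := by ring
    _ = q ^ 2 + (p ^ 2 + c) + 2 * q * p := by rw [← h]
    _ = (q + p) ^ 2 + c := by ring

theorem add_ne_zero_of_sq_eq_sq_add (hc : c ≠ 0) (h : q ^ 2 = p ^ 2 + c) : q + p ≠ 0 := by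
  intro hb
  have key := two_mul_mul_add_eq_of_sq_eq_sq_add h
  rw [hb, mul_zero, zero_pow two_ne_zero, zero_add] at key
  exact hc key.symm

theorem injOn_add_setOf_sq_eq_sq_add [IsCancelAdd R] [IsCancelMulZero R] [NeZero (2 : R)]
    (hc : c ≠ 0) :
    Set.InjOn (fun pq : R × R ↦ pq.2 + pq.1) {pq | pq.2 ^ 2 = pq.1 ^ 2 + c} := by
  rintro ⟨p, q⟩ h ⟨p', q'⟩ h' (hb : q + p = q' + p')
  have hq : q = q' := by
    have hmul : 2 * q * (q + p) = 2 * q' * (q + p) := by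
      rw [two_mul_mul_add_eq_of_sq_eq_sq_add h, hb, two_mul_mul_add_eq_of_sq_eq_sq_add h']
    exact mul_left_cancel₀ two_ne_zero
      (mul_right_cancel₀ (add_ne_zero_of_sq_eq_sq_add hc h) hmul)
  subst hq
  exact Prod.ext (add_left_cancel hb) rfl

end Semiring

theorem add_dvd_of_sq_eq_sq_add {p q c : ℕ} (h : q ^ 2 = p ^ 2 + c) : q + p ∣ c := by
  have hdvd : q + p ∣ (q + p) ^ 2 + c :=
    two_mul_mul_add_eq_of_sq_eq_sq_add h ▸ dvd_mul_left (q + p) (2 * q)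
  exact (Nat.dvd_add_right (dvd_pow_self (q + p) two_ne_zero)).mp hdvd

section Real

variable {p q c : ℝ}

theorem sqrt_lt_add_of_sq_eq_sq_add (hp : 0 < p) (hq : 0 ≤ q) (h : q ^ 2 = p ^ 2 + c) :
    √c < q + p := by
  rw [Real.sqrt_lt' (by positivity)]
  calc c < c + (2 * p ^ 2 + 2 * q * p) := lt_add_of_pos_right c (by positivity)
    _ = (q + p) ^ 2 := by linear_combination -h

theorem add_le_sqrt_three_mul_of_sq_eq_sq_add (hb : 0 ≤ q + p) (hpq : 2 * p ≤ q)
    (h : q ^ 2 = p ^ 2 + c) : q + p ≤ √(3 * c) := by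
  apply Real.le_sqrt_of_sq_le
  calc (q + p) ^ 2 = (q + p) * (q + p) := sq _
    _ ≤ (q + p) * (3 * (q - p)) := mul_le_mul_of_nonneg_left (by linarith) hb
    _ = 3 * c := by linear_combination 3 * h

end Real

/-- The divisor-counting bound for `f₂` in the proof of Theorem 1.6: the number
of pairs `(p,q)` of positive integers with `q² − p² = c` and `2p ≤ q` is at most
the number of positive divisors `b` of `c` with `√c < b ≤ √(3c)`. -/
theorem stmt15 (c : ℕ) (hc : 0 < c) :
    Nat.card {pq : ℕ × ℕ // 0 < pq.1 ∧ 0 < pq.2 ∧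
        pq.2 ^ 2 = pq.1 ^ 2 + c ∧ 2 * pq.1 ≤ pq.2}
      ≤ Nat.card {b : ℕ // 0 < b ∧ b ∣ c ∧
          Real.sqrt (c : ℝ) < (b : ℝ) ∧ (b : ℝ) ≤ Real.sqrt (3 * (c : ℝ))} := by
  refine Set.ncard_le_ncard_of_injOn (fun pq : ℕ × ℕ ↦ pq.2 + pq.1) ?mapsTo ?injOn ?finite
  case mapsTo =>
    rintro ⟨p, q⟩ ⟨hp, hq, h, hpq⟩
    have hℝ : (q : ℝ) ^ 2 = (p : ℝ) ^ 2 + c := mod_cast h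
    refine ⟨Nat.add_pos_left hq p, add_dvd_of_sq_eq_sq_add h, ?_, ?_⟩ <;> push_cast
    · exact sqrt_lt_add_of_sq_eq_sq_add (mod_cast hp) q.cast_nonneg hℝ
    · exact add_le_sqrt_three_mul_of_sq_eq_sq_add (by positivity) (mod_cast hpq) hℝ
  case injOn =>
    exact (injOn_add_setOf_sq_eq_sq_add hc.ne').mono fun _ ⟨_, _, h, _⟩ ↦ h
  case finite =>
    exact (Set.finite_Iic c).subset fun _ ⟨_, hdvd, _⟩ ↦ Nat.le_of_dvd hc hdvd
end

section
/- Let D be a positive squarefree integer and r a positive integer. Then the number of pairs of positive integers (p, q) with q² − p² = r² D and 2p ≤ q equals Σ_{g ∣ r} f(r/g), where for a positive integer u, f(u) denotes the number of pairs of positive integers (p, q) with q² − p² = u² D, gcd(p, q) = 1, and 2p ≤ q, and the sum runs over the positive divisors g of r. -/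
/-!
Dividing a solution `(p, q)` of `q² - p² = r²D` by `g = gcd p q` leaves a coprime pair. Since `g²`
divides `r²D` and `D` is squarefree, `g ∣ r`, so the coprime pair solves the equation for `r / g`.
Hence the solutions with gcd `g` are the `g`-multiples of the coprime solutions for `r / g`.
-/

theorem dvd_of_pow_dvd_pow_mul_of_squarefree {M : Type*} [CommMonoidWithZero M] [GCDMonoid M]
    {d r D : M} {n : ℕ} (hn : 2 ≤ n) (hD : Squarefree D) (h : d ^ n ∣ r ^ n * D) :
    d ∣ r := by
  obtain ⟨a, b, hd, hr, hab⟩ := extract_gcd d r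
  generalize gcd d r = e at hd hr
  subst hd hr
  rcases eq_or_ne e 0 with rfl | he
  · simp only [zero_mul, dvd_refl]
  have h_cancel : a ^ n ∣ b ^ n * D := by
    rwa [mul_pow, mul_pow, mul_assoc, mul_dvd_mul_iff_left (pow_ne_zero n he)] at h
  have h_dvd : a ^ n ∣ D := (gcd_isUnit_iff_isRelPrime.mp hab).pow.dvd_of_dvd_mul_left h_cancel
  have ha : IsUnit a := hD a (sq a ▸ (pow_dvd_pow a hn).trans h_dvd)
  exact mul_dvd_mul_left e ha.dvd

theorem image_smul_setOf_coprime {g : ℕ} (hg : g ≠ 0) (S : Set (ℕ × ℕ)) :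
    (g • ·) '' {x : ℕ × ℕ | g • x ∈ S ∧ x.1.Coprime x.2} = {x ∈ S | x.1.gcd x.2 = g} := by
  apply Set.Subset.antisymm
  · rintro _ ⟨x, ⟨hxS, hx⟩, rfl⟩
    have h_gcd : (g • x).1.gcd (g • x).2 = g := by
      rw [Prod.smul_fst, Prod.smul_snd, smul_eq_mul, smul_eq_mul, Nat.gcd_mul_left, hx.gcd_eq_one,
        mul_one]
    exact ⟨hxS, h_gcd⟩
  · rintro ⟨p, q⟩ ⟨hS, rfl⟩
    have h_smul : p.gcd q • (p / p.gcd q, q / p.gcd q) = (p, q) :=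
      Prod.ext (Nat.mul_div_cancel' (Nat.gcd_dvd_left p q))
        (Nat.mul_div_cancel' (Nat.gcd_dvd_right p q))
    exact ⟨_, ⟨h_smul.symm ▸ hS, Nat.coprime_div_gcd_div_gcd (Nat.pos_of_ne_zero hg)⟩, h_smul⟩

theorem ncard_eq_sum_ncard_coprime {S : Set (ℕ × ℕ)} (hS : S.Finite) {s : Finset ℕ}
    (hs : ∀ g ∈ s, g ≠ 0) (hgcd : ∀ x ∈ S, x.1.gcd x.2 ∈ s) :
    S.ncard = ∑ g ∈ s, {x : ℕ × ℕ | g • x ∈ S ∧ x.1.Coprime x.2}.ncard := by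
  classical
  rw [Set.ncard_eq_toFinset_card S hS,
    Finset.card_eq_sum_card_fiberwise fun x hx => hgcd x (hS.mem_toFinset.mp hx)]
  refine Finset.sum_congr rfl fun g hg => ?_
  have h_fiber : {x ∈ hS.toFinset | x.1.gcd x.2 = g} = {x ∈ S | x.1.gcd x.2 = g} := by
    simp only [Finset.coe_filter, hS.mem_toFinset]
  rw [← Set.ncard_coe_finset, h_fiber, ← image_smul_setOf_coprime (hs g hg),
    Set.ncard_image_of_injective _ (smul_right_injective _ (hs g hg))]

/-- The pairs `(p, q)` of positive integers with `q² - p² = N` and `2p ≤ q`: the solutions to be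
counted, for `N = r²D`. The equation is written additively to avoid truncated subtraction. -/
def sqDiffPairs (N : ℕ) : Set (ℕ × ℕ) :=
  {x | 0 < x.1 ∧ 0 < x.2 ∧ x.2 ^ 2 = x.1 ^ 2 + N ∧ 2 * x.1 ≤ x.2}

theorem finite_sqDiffPairs (N : ℕ) : (sqDiffPairs N).Finite := by
  refine (Set.finite_Iic (2 * N, 2 * N)).subset ?_
  rintro ⟨p, q⟩ ⟨-, -, h, hpq⟩
  dsimp only at h hpq
  have h_sq : (2 * p) ^ 2 ≤ q ^ 2 := Nat.pow_le_pow_left hpq 2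
  have h_self : q ≤ q ^ 2 := Nat.le_self_pow two_ne_zero q
  have h_bound : q ≤ 2 * N := by linarith
  have h_bound' : p ≤ 2 * N := by linarith
  exact ⟨h_bound', h_bound⟩

theorem smul_mem_sqDiffPairs_iff {g : ℕ} (hg : 0 < g) {N : ℕ} {x : ℕ × ℕ} :
    g • x ∈ sqDiffPairs (g ^ 2 * N) ↔ x ∈ sqDiffPairs N := by
  have h_eq : (g * x.2) ^ 2 = (g * x.1) ^ 2 + g ^ 2 * N ↔ x.2 ^ 2 = x.1 ^ 2 + N := by
    rw [mul_pow, mul_pow, ← mul_add, Nat.mul_right_inj (pow_pos hg 2).ne']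
  have h_le : 2 * (g * x.1) ≤ g * x.2 ↔ 2 * x.1 ≤ x.2 := by
    rw [mul_left_comm, Nat.mul_le_mul_left_iff hg]
  simp only [sqDiffPairs, Set.mem_ofPred_eq, Prod.smul_fst, Prod.smul_snd, smul_eq_mul,
    Nat.mul_pos_iff_of_pos_left hg, h_eq, h_le]

theorem gcd_dvd_of_mem_sqDiffPairs {D r : ℕ} (hD : Squarefree D) {x : ℕ × ℕ}
    (hx : x ∈ sqDiffPairs (r ^ 2 * D)) : x.1.gcd x.2 ∣ r := by
  obtain ⟨-, -, h, -⟩ := hx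
  refine dvd_of_pow_dvd_pow_mul_of_squarefree le_rfl hD ?_
  rw [← Nat.dvd_add_right (pow_dvd_pow_of_dvd (Nat.gcd_dvd_left x.1 x.2) 2), ← h]
  exact pow_dvd_pow_of_dvd (Nat.gcd_dvd_right x.1 x.2) 2

/-- Identity (4.10) in the proof of Theorem 1.6: the number of pairs `(p,q)` of
positive integers with `q² − p² = r²D` and `2p ≤ q` equals `Σ_{g ∣ r} f(r/g)`,
where `f(u)` counts such pairs for `u²D` that are in addition coprime. -/
theorem stmt16 (D r : ℕ) (hD : 0 < D) (hDsf : Squarefree D) (hr : 0 < r) :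
    Nat.card {pq : ℕ × ℕ // 0 < pq.1 ∧ 0 < pq.2 ∧
        pq.2 ^ 2 = pq.1 ^ 2 + r ^ 2 * D ∧ 2 * pq.1 ≤ pq.2}
      = ∑ g ∈ r.divisors,
          Nat.card {pq : ℕ × ℕ // 0 < pq.1 ∧ 0 < pq.2 ∧
            pq.2 ^ 2 = pq.1 ^ 2 + (r / g) ^ 2 * D ∧ Nat.gcd pq.1 pq.2 = 1 ∧
            2 * pq.1 ≤ pq.2} := by
  have hgcd (x) (hx : x ∈ sqDiffPairs (r ^ 2 * D)) : x.1.gcd x.2 ∈ r.divisors :=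
    Nat.mem_divisors.mpr ⟨gcd_dvd_of_mem_sqDiffPairs hDsf hx, hr.ne'⟩
  have hscale {g} (hg : g ∈ r.divisors) (x) :
      g • x ∈ sqDiffPairs (r ^ 2 * D) ↔ x ∈ sqDiffPairs ((r / g) ^ 2 * D) := by
    rw [← smul_mem_sqDiffPairs_iff (N := (r / g) ^ 2 * D) (Nat.pos_of_mem_divisors hg), ← mul_assoc,
      ← mul_pow, Nat.mul_div_cancel' (Nat.dvd_of_mem_divisors hg)]
  change (sqDiffPairs (r ^ 2 * D)).ncard = _
  rw [ncard_eq_sum_ncard_coprime (finite_sqDiffPairs _)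
    (fun g hg => (Nat.pos_of_mem_divisors hg).ne') hgcd]
  refine Finset.sum_congr rfl fun g hg => Nat.card_congr <| Equiv.subtypeEquivRight fun x => ?_
  rw [Set.mem_ofPred_eq, hscale hg]
  simp only [sqDiffPairs, Set.mem_ofPred_eq, Nat.Coprime, and_comm, and_left_comm]
end
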